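/- Let λ ∈ ℝ and let n ≥ 2 be an integer. Suppose h ∈ C²((0,L)) satisfies 2r²h(r)h''(r) = (n-1)h(r)(h(r)-1) + r h'(r)(r h'(r) - λr - (n-1)) with h(r) > 0 on (0,L), where L ∈ (0,∞) is a constant with L < -(n-1)/λ in case λ < 0. Then there exist constants c₃ > 0 and c₄ ∈ ℝ such that c₄ ≤ h'(r) ≤ c₃ for all r ∈ [L/2, L). -/

import Mathlib

open Set Filter Topology

/-!
Where `h' ≤ 0`, the right-hand side of the equation is at least `-(n - 1) h`, so `h''` is bounded
below, and `h'` cannot drop faster than linearly once it is negative.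

For the upper bound put `u = √h`. Since `4 u³ u'' = 2 h h'' - (h')²`, the quadratic term in `h'`
disappears, and where `u' ≥ 0` the equation gives the linear inequality `u'' ≤ k² u`. Then
`u' - k u` decreases whenever it is positive, so `u' ≤ k u + W`; Grönwall's inequality bounds `u`,
and `h' = 2 u u' ≤ 2 u (k u + W)`.
-/

section Comparison

variable {f f' B B' u u' u'' : ℝ → ℝ} {a b C K ε k W : ℝ}

theorem le_on_Ico_of_deriv_lt_of_eq (hf : ∀ x ∈ Ico a b, HasDerivAt f (f' x) x)
    (hB : ∀ x ∈ Ico a b, HasDerivAt B (B' x) x) (ha : f a ≤ B a)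
    (hlt : ∀ x ∈ Ico a b, f x = B x → f' x < B' x) : ∀ x ∈ Ico a b, f x ≤ B x := by
  intro r hr
  have hsub : Icc a r ⊆ Ico a b := Icc_subset_Ico_right hr.2
  have hsub' : Ico a r ⊆ Ico a b := Ico_subset_Icc_self.trans hsub
  exact image_le_of_deriv_right_lt_deriv_boundary'
    (fun x hx => (hf x (hsub hx)).continuousAt.continuousWithinAt)
    (fun x hx => (hf x (hsub' hx)).hasDerivWithinAt) ha
    (fun x hx => (hB x (hsub hx)).continuousAt.continuousWithinAt)
    (fun x hx => (hB x (hsub' hx)).hasDerivWithinAt)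
    (fun x hx => hlt x (hsub' hx)) (right_mem_Icc.2 hr.1)

theorem min_sub_le_of_neg_lt_deriv_of_nonpos (hf : ∀ x ∈ Ico a b, HasDerivAt f (f' x) x)
    (hC : 0 ≤ C) (hlt : ∀ x ∈ Ico a b, f x ≤ 0 → -C < f' x) :
    ∀ x ∈ Ico a b, min (f a) 0 - C * (x - a) ≤ f x := by
  have hline (x : ℝ) : HasDerivAt (fun y => min (f a) 0 - C * (y - a)) (-C) x := by
    simpa using (((hasDerivAt_id x).sub_const a).const_mul C).const_sub (min (f a) 0)
  refine fun r hr => neg_le_neg_iff.1 (le_on_Ico_of_deriv_lt_of_eq (fun x hx => (hf x hx).neg)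
    (fun x _ => (hline x).neg) (by simp) (fun x hx heq => ?_) r hr)
  have hfx : f x ≤ 0 := by
    have hdrop : 0 ≤ C * (x - a) := mul_nonneg hC (sub_nonneg.2 hx.1)
    linarith [neg_inj.1 heq, min_le_right (f a) 0]
  exact neg_lt_neg (hlt x hx hfx)

theorem deriv_le_mul_add_of_second_deriv_le (hu : ∀ x ∈ Ico a b, HasDerivAt u (u' x) x)
    (hu' : ∀ x ∈ Ico a b, HasDerivAt u' (u'' x) x) (hu0 : ∀ x ∈ Ico a b, 0 ≤ u x)
    (hle : ∀ x ∈ Ico a b, 0 ≤ u' x → u'' x ≤ k ^ 2 * u x) (hk : 0 < k) (hW : 0 < W)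
    (ha : u' a ≤ k * u a + W) : ∀ x ∈ Ico a b, u' x ≤ k * u x + W := by
  suffices hfence : ∀ x ∈ Ico a b, u' x - k * u x ≤ W from
    fun x hx => sub_le_iff_le_add'.1 (hfence x hx)
  refine le_on_Ico_of_deriv_lt_of_eq (fun x hx => (hu' x hx).sub ((hu x hx).const_mul k))
    (fun x _ => hasDerivAt_const x W) (sub_le_iff_le_add'.2 ha) fun x hx heq => ?_
  have hu'x : u' x = k * u x + W := sub_eq_iff_eq_add'.1 heq
  have hu'0 : 0 ≤ u' x := hu'x ▸ add_nonneg (mul_nonneg hk.le (hu0 x hx)) hW.le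
  calc u'' x - k * u' x ≤ k ^ 2 * u x - k * u' x := sub_le_sub_right (hle x hx hu'0) _
    _ = -(k * W) := by rw [hu'x]; ring
    _ < 0 := neg_neg_of_pos (mul_pos hk hW)

theorem le_gronwallBound_of_deriv_le (hf : ∀ x ∈ Ico a b, HasDerivAt f (f' x) x)
    (hle : ∀ x ∈ Ico a b, f' x ≤ K * f x + ε) :
    ∀ x ∈ Ico a b, f x ≤ gronwallBound (f a) K ε (x - a) := by
  intro r hr
  have hsub : Icc a r ⊆ Ico a b := Icc_subset_Ico_right hr.2
  have hsub' : Ico a r ⊆ Ico a b := Ico_subset_Icc_self.trans hsub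
  exact le_gronwallBound_of_liminf_deriv_right_le
    (fun x hx => (hf x (hsub hx)).continuousAt.continuousWithinAt)
    (fun x hx _ hlt => (hf x (hsub' hx)).hasDerivWithinAt.liminf_right_slope_le hlt) le_rfl
    (fun x hx => hle x (hsub' hx)) r (right_mem_Icc.2 hr.1)

theorem bddAbove_image_of_deriv_le (hf : ∀ x ∈ Ico a b, HasDerivAt f (f' x) x)
    (hf0 : ∀ x ∈ Ico a b, 0 ≤ f x) (hK : 0 ≤ K) (hε : 0 ≤ ε)
    (hle : ∀ x ∈ Ico a b, f' x ≤ K * f x + ε) : BddAbove (f '' Ico a b) := by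
  refine ⟨gronwallBound (f a) K ε (b - a), forall_mem_image.2 fun x hx => ?_⟩
  have hfa : 0 ≤ f a := hf0 a (left_mem_Ico.2 (hx.1.trans_lt hx.2))
  exact (le_gronwallBound_of_deriv_le hf hle x hx).trans
    (gronwallBound_mono hfa hε hK (sub_le_sub_right hx.2.le a))

theorem bddAbove_mul_deriv_of_second_deriv_le (hu : ∀ x ∈ Ico a b, HasDerivAt u (u' x) x)
    (hu' : ∀ x ∈ Ico a b, HasDerivAt u' (u'' x) x) (hu0 : ∀ x ∈ Ico a b, 0 ≤ u x)
    (hle : ∀ x ∈ Ico a b, 0 ≤ u' x → u'' x ≤ k ^ 2 * u x) (hk : 0 < k) :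
    BddAbove ((fun x => u x * u' x) '' Ico a b) := by
  obtain ⟨W, hW, haW⟩ : ∃ W, 0 < W ∧ u' a ≤ k * u a + W :=
    ⟨max (u' a - k * u a) 1, by positivity, sub_le_iff_le_add'.1 (le_max_left _ _)⟩
  have hgrowth := deriv_le_mul_add_of_second_deriv_le hu hu' hu0 hle hk hW haW
  obtain ⟨U, hU⟩ := bddAbove_image_of_deriv_le hu hu0 hk.le hW.le hgrowth
  refine ⟨U * (k * U + W), forall_mem_image.2 fun x hx => ?_⟩
  have hux : 0 ≤ u x := hu0 x hx
  have huU : u x ≤ U := hU (mem_image_of_mem u hx)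
  calc u x * u' x ≤ u x * (k * u x + W) := mul_le_mul_of_nonneg_left (hgrowth x hx) hux
    _ ≤ U * (k * U + W) := by gcongr; exact hux.trans huU

end Comparison

theorem hasDerivAt_deriv_sqrt {h h' : ℝ → ℝ} {h'' x : ℝ} (hh : HasDerivAt h (h' x) x)
    (hh' : HasDerivAt h' h'' x) (hpos : 0 < h x) :
    HasDerivAt (fun y => h' y / (2 * √(h y)))
      ((2 * h x * h'' - h' x ^ 2) / (4 * √(h x) ^ 3)) x := by
  have hsqrt : 0 < √(h x) := Real.sqrt_pos.2 hpos
  refine (hh'.div ((hh.sqrt hpos.ne').const_mul 2) (by positivity)).congr_deriv ?_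
  have hsq : h x = √(h x) ^ 2 := (Real.sq_sqrt hpos.le).symm
  generalize √(h x) = s at *
  rw [hsq]
  field_simp
  ring

/-- `h` is a positive solution on `s` of
`2 r² h h'' = m h (h - 1) + r h' (r h' - lam r - m)`, where `m` replaces the paper's `n - 1` and may
be any real number. The first and second derivatives are passed as the functions `h'` and `h''`, and
are two-sided at every point of `s`. -/
structure IsPositiveSolutionOn (lam m : ℝ) (h h' h'' : ℝ → ℝ) (s : Set ℝ) : Prop where
  pos : ∀ r ∈ s, 0 < h r
  hasDerivAt : ∀ r ∈ s, HasDerivAt h (h' r) r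
  hasDerivAt_deriv : ∀ r ∈ s, HasDerivAt h' (h'' r) r
  ode : ∀ r ∈ s,
    2 * r ^ 2 * h r * h'' r = m * h r * (h r - 1) + r * h' r * (r * h' r - lam * r - m)

namespace IsPositiveSolutionOn

variable {lam m a b r : ℝ} {h h' h'' : ℝ → ℝ} {s t : Set ℝ}

theorem of_contDiffOn (hs : IsOpen s) (hreg : ContDiffOn ℝ 2 h s) (hpos : ∀ r ∈ s, 0 < h r)
    (hode : ∀ r ∈ s, 2 * r ^ 2 * h r * deriv (deriv h) r =
      m * h r * (h r - 1) + r * deriv h r * (r * deriv h r - lam * r - m)) :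
    IsPositiveSolutionOn lam m h (deriv h) (deriv (deriv h)) s where
  pos := hpos
  hasDerivAt _ hr :=
    ((hreg.differentiableOn two_ne_zero).differentiableAt (hs.mem_nhds hr)).hasDerivAt
  hasDerivAt_deriv _ hr :=
    (((hreg.deriv_of_isOpen hs one_add_one_eq_two.le).differentiableOn
      one_ne_zero).differentiableAt (hs.mem_nhds hr)).hasDerivAt
  ode := hode

theorem mono (hsol : IsPositiveSolutionOn lam m h h' h'' t) (hst : s ⊆ t) :
    IsPositiveSolutionOn lam m h h' h'' s where
  pos r hr := hsol.pos r (hst hr)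
  hasDerivAt r hr := hsol.hasDerivAt r (hst hr)
  hasDerivAt_deriv r hr := hsol.hasDerivAt_deriv r (hst hr)
  ode r hr := hsol.ode r (hst hr)

theorem neg_le_two_mul_sq_mul_of_deriv_nonpos (hsol : IsPositiveSolutionOn lam m h h' h'' s)
    (hm : 0 ≤ m) (hr : r ∈ s) (hr0 : 0 ≤ r) (hlam : 0 ≤ lam * r + m) (hh' : h' r ≤ 0) :
    -m ≤ 2 * r ^ 2 * h'' r := by
  have hpos : 0 < h r := hsol.pos r hr
  have hrh' : r * h' r ≤ 0 := mul_nonpos_of_nonneg_of_nonpos hr0 hh'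
  have hdrift : 0 ≤ r * h' r * (r * h' r - lam * r - m) :=
    mul_nonneg_of_nonpos_of_nonpos hrh' (by linarith)
  have hsq : 0 ≤ m * h r ^ 2 := by positivity
  refine le_of_mul_le_mul_right ?_ hpos
  linarith [hsol.ode r hr]

theorem sq_mul_sub_le_of_deriv_nonneg (hsol : IsPositiveSolutionOn lam m h h' h'' s) (hm : 0 ≤ m)
    (hr : r ∈ s) (hr0 : 0 ≤ r) (hlam : 0 ≤ lam * r + m) (hh' : 0 ≤ h' r) :
    r ^ 2 * (2 * h r * h'' r - h' r ^ 2) ≤ m * h r ^ 2 := by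
  have hdrift : 0 ≤ r * h' r * (lam * r + m) := by positivity
  have hlin : 0 ≤ m * h r := mul_nonneg hm (hsol.pos r hr).le
  linarith [hsol.ode r hr]

theorem bddBelow_deriv (hsol : IsPositiveSolutionOn lam m h h' h'' (Ico a b)) (hm : 0 ≤ m)
    (ha : 0 < a) (hlam : ∀ r ∈ Ico a b, 0 ≤ lam * r + m) : BddBelow (h' '' Ico a b) := by
  -- `m + 1` rather than `m`, so that the bound on `h''` below is strict even if `m = 0`.
  obtain ⟨C, hC, hCa⟩ : ∃ C, 0 ≤ C ∧ 2 * a ^ 2 * C = m + 1 :=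
    ⟨(m + 1) / (2 * a ^ 2), by positivity, by field_simp⟩
  have hlt : ∀ r ∈ Ico a b, h' r ≤ 0 → -C < h'' r := by
    intro r hr hh'
    have hr0 : 0 < r := ha.trans_le hr.1
    have hmC : m < 2 * r ^ 2 * C := by
      have : 2 * a ^ 2 * C ≤ 2 * r ^ 2 * C := by gcongr; exact hr.1
      linarith
    refine lt_of_mul_lt_mul_left ?_ (show 0 ≤ 2 * r ^ 2 by positivity)
    linarith [hsol.neg_le_two_mul_sq_mul_of_deriv_nonpos hm hr hr0.le (hlam r hr) hh']
  refine ⟨min (h' a) 0 - C * (b - a), forall_mem_image.2 fun r hr => ?_⟩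
  refine le_trans ?_ (min_sub_le_of_neg_lt_deriv_of_nonpos hsol.hasDerivAt_deriv hC hlt r hr)
  gcongr
  exact hr.2.le

theorem second_deriv_sqrt_le {k : ℝ} (hsol : IsPositiveSolutionOn lam m h h' h'' s) (hm : 0 ≤ m)
    (hr : r ∈ s) (hr0 : 0 < r) (hlam : 0 ≤ lam * r + m) (hk : m ≤ (2 * r * k) ^ 2)
    (hh' : 0 ≤ h' r) :
    (2 * h r * h'' r - h' r ^ 2) / (4 * √(h r) ^ 3) ≤ k ^ 2 * √(h r) := by
  have hpos : 0 < h r := hsol.pos r hr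
  have hquad : 2 * h r * h'' r - h' r ^ 2 ≤ 4 * k ^ 2 * h r ^ 2 := by
    refine le_of_mul_le_mul_left ?_ (show 0 < r ^ 2 by positivity)
    calc r ^ 2 * (2 * h r * h'' r - h' r ^ 2) ≤ m * h r ^ 2 :=
          hsol.sq_mul_sub_le_of_deriv_nonneg hm hr hr0.le hlam hh'
      _ ≤ (2 * r * k) ^ 2 * h r ^ 2 := by gcongr
      _ = r ^ 2 * (4 * k ^ 2 * h r ^ 2) := by ring
  rw [div_le_iff₀ (by positivity)]
  calc 2 * h r * h'' r - h' r ^ 2 ≤ 4 * k ^ 2 * h r ^ 2 := hquad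
    _ = 4 * k ^ 2 * (√(h r) ^ 2) ^ 2 := by rw [Real.sq_sqrt hpos.le]
    _ = k ^ 2 * √(h r) * (4 * √(h r) ^ 3) := by ring

theorem bddAbove_deriv (hsol : IsPositiveSolutionOn lam m h h' h'' (Ico a b)) (hm : 0 ≤ m)
    (ha : 0 < a) (hlam : ∀ r ∈ Ico a b, 0 ≤ lam * r + m) : BddAbove (h' '' Ico a b) := by
  obtain ⟨k, hk, hka⟩ : ∃ k, 0 < k ∧ 2 * a * k = m + 1 :=
    ⟨(m + 1) / (2 * a), by positivity, by field_simp⟩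
  have hle : ∀ r ∈ Ico a b, 0 ≤ h' r / (2 * √(h r)) →
      (2 * h r * h'' r - h' r ^ 2) / (4 * √(h r) ^ 3) ≤ k ^ 2 * √(h r) := by
    intro r hr hu'
    have hsqrt : 0 < √(h r) := Real.sqrt_pos.2 (hsol.pos r hr)
    have hmk : m ≤ (2 * r * k) ^ 2 :=
      calc m ≤ (m + 1) ^ 2 := by nlinarith
        _ = (2 * a * k) ^ 2 := by rw [hka]
        _ ≤ (2 * r * k) ^ 2 := by gcongr; exact hr.1
    have hh' : 0 ≤ h' r := by rwa [le_div_iff₀ (by positivity), zero_mul] at hu'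
    exact hsol.second_deriv_sqrt_le hm hr (ha.trans_le hr.1) (hlam r hr) hmk hh'
  obtain ⟨M, hM⟩ := bddAbove_mul_deriv_of_second_deriv_le
    (fun r hr => (hsol.hasDerivAt r hr).sqrt (hsol.pos r hr).ne')
    (fun r hr => hasDerivAt_deriv_sqrt (hsol.hasDerivAt r hr) (hsol.hasDerivAt_deriv r hr)
      (hsol.pos r hr))
    (fun r _ => Real.sqrt_nonneg (h r)) hle hk
  refine ⟨2 * M, forall_mem_image.2 fun r hr => ?_⟩
  have hsqrt : 0 < √(h r) := Real.sqrt_pos.2 (hsol.pos r hr)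
  calc h' r = 2 * (√(h r) * (h' r / (2 * √(h r)))) := by field_simp
    _ ≤ 2 * M := mul_le_mul_of_nonneg_left (hM (mem_image_of_mem _ hr)) zero_le_two

end IsPositiveSolutionOn

theorem mul_add_nonneg_of_lt_neg_div {lam m L r : ℝ} (hm : 0 ≤ m) (hL : lam < 0 → L < -m / lam)
    (hr0 : 0 ≤ r) (hrL : r ≤ L) : 0 ≤ lam * r + m := by
  rcases le_or_gt 0 lam with hlam | hlam
  · positivity
  · have hr : -m < r * lam := (lt_div_iff_of_neg hlam).1 (hrL.trans_lt (hL hlam))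
    linarith

theorem derivative_bounds_general {lam m a b : ℝ} {h h' h'' : ℝ → ℝ} (hm : 0 ≤ m) (ha : 0 < a)
    (hlam : ∀ r ∈ Ico a b, 0 ≤ lam * r + m)
    (hsol : IsPositiveSolutionOn lam m h h' h'' (Ico a b)) :
    ∃ c₃ : ℝ, 0 < c₃ ∧ ∃ c₄ : ℝ, ∀ r ∈ Ico a b, c₄ ≤ h' r ∧ h' r ≤ c₃ := by
  obtain ⟨c₄, hc₄⟩ := hsol.bddBelow_deriv hm ha hlam
  obtain ⟨c, hc⟩ := hsol.bddAbove_deriv hm ha hlam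
  exact ⟨max c 1, by positivity, c₄, fun r hr =>
    ⟨hc₄ (mem_image_of_mem h' hr), (hc (mem_image_of_mem h' hr)).trans (le_max_left c 1)⟩⟩

theorem derivative_bounds (lam : ℝ) (n : ℕ) (hn2 : 2 ≤ n) (L : ℝ) (hL : 0 < L)
    (hLlam : lam < 0 → L < -((n : ℝ) - 1) / lam) (h : ℝ → ℝ)
    (hreg : ContDiffOn ℝ 2 h (Set.Ioo 0 L))
    (hode : ∀ r ∈ Set.Ioo (0 : ℝ) L,
      2 * r ^ 2 * h r * deriv (deriv h) r =
        ((n : ℝ) - 1) * h r * (h r - 1) +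
          r * deriv h r * (r * deriv h r - lam * r - ((n : ℝ) - 1)))
    (hpos : ∀ r ∈ Set.Ioo (0 : ℝ) L, 0 < h r) :
    ∃ c₃ : ℝ, 0 < c₃ ∧ ∃ c₄ : ℝ, ∀ r ∈ Set.Ico (L / 2) L, c₄ ≤ deriv h r ∧ deriv h r ≤ c₃ := by
  have hm : (0 : ℝ) ≤ n - 1 := sub_nonneg.2 (Nat.one_le_cast.2 (one_le_two.trans hn2))
  have hsub : Ico (L / 2) L ⊆ Ioo 0 L := fun r hr => ⟨(half_pos hL).trans_le hr.1, hr.2⟩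
  exact derivative_bounds_general hm (half_pos hL)
    (fun r hr => mul_add_nonneg_of_lt_neg_div hm hLlam (hsub hr).1.le hr.2.le)
    ((IsPositiveSolutionOn.of_contDiffOn isOpen_Ioo hreg hpos hode).mono hsub)
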